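/- arXiv:2302.07118 — 4 statements merged into one kernel-verified Lean document; each statement's English description precedes it below -/
import Mathlib

section
/- Let K be a field and Λ a finite-dimensional associative unital K-algebra. Let f : P_1 → P_0 be a homomorphism of finitely generated projective left Λ-modules and let X = coker(f). Let νf : νP_1 → νP_0 be the K-linear dual of the map Hom_Λ(f,Λ) : Hom_Λ(P_0,Λ) → Hom_Λ(P_1,Λ), and set T = ker(νf). Then for every finite-dimensional left Λ-module L one has dim_K Hom_Λ(P_0, L) − dim_K Hom_Λ(P_1, L) = dim_K Hom_Λ(X, L) − dim_K Hom_Λ(L, T). (When f is a minimal projective presentation of X, T is the Auslander–Reiten translate τX and the left-hand side equals g_X · dim L; this is the paper's Lemma 'interp'.) -/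
open LinearMap Module

variable (K Λ : Type*) [Field K] [Ring Λ] [Algebra K Λ]

section Nu

variable (P : Type*) [AddCommGroup P] [Module Λ P]

/-- Right multiplication `g ↦ g·a` on `Hom_Λ(P, Λ)`, where `(g·a)(p) = g(p) * a`. -/
def rmul (a : Λ) : (P →ₗ[Λ] Λ) →ₗ[K] (P →ₗ[Λ] Λ) where
  toFun g :=
    { toFun := fun p => g p * a
      map_add' := fun p q => by simp [add_mul]
      map_smul' := fun c p => by simp [smul_mul_assoc, mul_assoc] }
  map_add' g h := by ext p; simp [add_mul]
  map_smul' k g := by ext p; simp [smul_mul_assoc]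

@[simp] lemma rmul_apply (a : Λ) (g : P →ₗ[Λ] Λ) (p : P) :
    rmul K Λ P a g p = g p * a := rfl

lemma rmul_one (g : P →ₗ[Λ] Λ) : rmul K Λ P 1 g = g := by ext p; simp

lemma rmul_mul (a b : Λ) (g : P →ₗ[Λ] Λ) :
    rmul K Λ P (a * b) g = rmul K Λ P b (rmul K Λ P a g) := by ext p; simp [mul_assoc]

lemma rmul_add' (a b : Λ) (g : P →ₗ[Λ] Λ) :
    rmul K Λ P (a + b) g = rmul K Λ P a g + rmul K Λ P b g := by ext p; simp [mul_add]

lemma rmul_zero' (g : P →ₗ[Λ] Λ) : rmul K Λ P 0 g = 0 := by ext p; simp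

lemma rmul_ksmul (k : K) (a : Λ) (g : P →ₗ[Λ] Λ) :
    rmul K Λ P (k • a) g = k • rmul K Λ P a g := by ext p; simp [mul_smul_comm]

/-- `νP`, the `K`-linear dual of the right `Λ`-module `Hom_Λ(P, Λ)`. -/
abbrev Nu := (P →ₗ[Λ] Λ) →ₗ[K] K

instance : SMul Λ (Nu K Λ P) :=
  ⟨fun a φ => φ.comp (rmul K Λ P a)⟩

@[simp] lemma nu_smul_apply (a : Λ) (φ : Nu K Λ P) (g : P →ₗ[Λ] Λ) :
    (a • φ) g = φ (rmul K Λ P a g) := rfl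

/-- The left `Λ`-module structure on `νP` given by `(a • φ)(g) = φ(g · a)`. -/
instance : Module Λ (Nu K Λ P) where
  one_smul φ := by ext g; simp [rmul_one]
  mul_smul a b φ := by ext g; simp [rmul_mul]
  smul_zero a := by ext g; simp
  smul_add a φ ψ := by ext g; simp
  add_smul a b φ := by ext g; simp [rmul_add']
  zero_smul φ := by ext g; simp [rmul_zero']

instance : IsScalarTower K Λ (Nu K Λ P) :=
  ⟨fun k a φ => by ext g; simp [rmul_ksmul]⟩

instance : SMulCommClass Λ K (Nu K Λ P) :=
  ⟨fun a k φ => by ext g; simp⟩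

end Nu

section NuMap

variable (P₁ P₀ : Type*) [AddCommGroup P₁] [Module Λ P₁] [AddCommGroup P₀] [Module Λ P₀]

/-- Precomposition with `f`, as a map `Hom_Λ(P₀, Λ) → Hom_Λ(P₁, Λ)`. -/
def homf (f : P₁ →ₗ[Λ] P₀) : (P₀ →ₗ[Λ] Λ) →ₗ[K] (P₁ →ₗ[Λ] Λ) where
  toFun g := g.comp f
  map_add' g h := by ext p; simp
  map_smul' k g := by ext p; simp

@[simp] lemma homf_apply (f : P₁ →ₗ[Λ] P₀) (g : P₀ →ₗ[Λ] Λ) (p : P₁) :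
    homf K Λ P₁ P₀ f g p = g (f p) := rfl

/-- `νf : νP₁ → νP₀`, the `K`-linear dual of `Hom_Λ(f, Λ)`, as a map of left `Λ`-modules. -/
def nuMap (f : P₁ →ₗ[Λ] P₀) : Nu K Λ P₁ →ₗ[Λ] Nu K Λ P₀ where
  toFun φ := φ.comp (homf K Λ P₁ P₀ f)
  map_add' φ ψ := by ext g; simp
  map_smul' a φ := by
    ext g
    show φ (rmul K Λ P₁ a (homf K Λ P₁ P₀ f g)) = φ (homf K Λ P₁ P₀ f (rmul K Λ P₀ a g))
    congr 1

end NuMap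

/-!
The proof is an index computation for `f^* = Hom_Λ(f, L) : Hom_Λ(P₀, L) → Hom_Λ(P₁, L)`. Its index
is the left-hand side when `L` is finite-dimensional, and by left exactness its kernel is
`Hom_Λ(X, L)`. The map sending `ξ` in the dual of `Hom_Λ(P, L)` to `l ↦ (g ↦ ξ (p ↦ g p • l))`
identifies that dual with `Hom_Λ(L, νP)`, naturally in the finitely generated projective module `P`:
a dual basis of `P` writes every `P → L` as a finite sum of maps `p ↦ g p • l`. Under this
identification the dual of `f^*` becomes composition with `νf`, whose kernel is `Hom_Λ(L, ker νf)`,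
so the latter is the dual of the cokernel of `f^*`.
-/

section Hom

variable {R : Type*} (S : Type*) [Semiring R] [Semiring S]
  {M N : Type*} [AddCommMonoid M] [Module R M] [AddCommMonoid N] [Module R N]
  (L : Type*) [AddCommMonoid L] [Module R L]

/-- `Hom(L, ker φ)` is the kernel of composition with `φ` on `Hom(L, M)`. -/
def homKerEquiv [SMul S R] [Module S M] [IsScalarTower S R M] [SMulCommClass R S M]
    [Module S N] [IsScalarTower S R N] [SMulCommClass R S N] (φ : M →ₗ[R] N) :
    (L →ₗ[R] ker φ) ≃ₗ[S] ker (φ.compRight S (M := L)) where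
  toFun u := ⟨(ker φ).subtype ∘ₗ u, LinearMap.ext fun l => (u l).2⟩
  invFun v := v.1.codRestrict (ker φ) (LinearMap.congr_fun v.2)
  map_add' _ _ := rfl
  map_smul' _ _ := rfl

end Hom

section HomLeft

variable {R : Type*} (S : Type*) [Ring R] [Ring S]
  {M N P : Type*} [AddCommGroup M] [Module R M] [AddCommGroup N] [Module R N]
  [AddCommGroup P] [Module R P]
  (L : Type*) [AddCommGroup L] [Module R L] [Module S L] [SMulCommClass R S L]

lemma isNoetherian_hom_of_finite [Module.Finite R P] [IsNoetherian S L] :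
    IsNoetherian S (P →ₗ[R] L) := by
  obtain ⟨n, s, hs⟩ := Module.Finite.exists_fin (R := R) (M := P)
  let eval : (P →ₗ[R] L) →ₗ[S] Fin n → L := LinearMap.pi fun i => applyₗ' S (s i)
  have eval_injective : Function.Injective eval := fun _ _ h =>
    LinearMap.ext_on_range hs (congrFun h)
  exact isNoetherian_of_injective eval eval_injective

lemma exact_lcomp_lcomp {f : M →ₗ[R] N} {q : N →ₗ[R] P}
    (hfq : Function.Exact f q) (hq : Function.Surjective q) :
    Function.Exact (lcomp S L q) (lcomp S L f) := by
  intro u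
  constructor
  · intro hu
    have range_le_ker : range f ≤ ker u := range_le_ker_iff.2 hu
    refine ⟨(range f).liftQ u range_le_ker ∘ₗ (hfq.linearEquivOfSurjective hq).symm, ?_⟩
    ext x
    simp
  · rintro ⟨v, rfl⟩
    ext x
    simp [hfq.apply_apply_eq_zero]

end HomLeft

section DualBasis

variable {R : Type*} [Semiring R] {P L : Type*} [AddCommMonoid P] [Module R P]
  [AddCommMonoid L] [Module R L]

lemma exists_finite_dual_basis [Module.Finite R P] [Module.Projective R P] :
    ∃ (n : ℕ) (p : Fin n → P) (g : Fin n → P →ₗ[R] R), ∀ x, ∑ i, g i x • p i = x := by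
  obtain ⟨n, s, t, -, -, hst⟩ := Module.Finite.exists_comp_eq_id_of_projective R P
  refine ⟨n, fun i => s fun j => if i = j then 1 else 0, fun i => LinearMap.proj i ∘ₗ t,
    fun x => ?_⟩
  exact (LinearMap.pi_apply_eq_sum_univ s (t x)).symm.trans (LinearMap.congr_fun hst x)

lemma sum_smulRight_dual_basis {ι : Type*} [Fintype ι] {p : ι → P} {g : ι → P →ₗ[R] R}
    (hpg : ∀ x, ∑ i, g i x • p i = x) (u : P →ₗ[R] L) :
    ∑ i, (g i).smulRight (u (p i)) = u := by
  ext x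
  simpa using congrArg u (hpg x)

end DualBasis

section Nakayama

variable (P L : Type*) [AddCommGroup P] [Module Λ P] [AddCommGroup L] [Module Λ L]
  [Module K L] [IsScalarTower K Λ L]

/-- The natural map `D Hom_Λ(P, L) → Hom_Λ(L, νP)`, where `D` is the `K`-linear dual. -/
def dualHomToNu : Dual K (P →ₗ[Λ] L) →ₗ[K] (L →ₗ[Λ] Nu K Λ P) where
  toFun ξ :=
    { toFun := fun l => ξ ∘ₗ (toSpanSingleton Λ L l).compRight K
      map_add' := fun l m => by
        ext g
        simp [toSpanSingleton_add, add_comp]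
      map_smul' := fun a l => by
        ext g
        refine congrArg ξ (LinearMap.ext fun p => ?_)
        simp [mul_smul] }
  map_add' _ _ := rfl
  map_smul' _ _ := rfl

lemma dualHomToNu_apply (ξ : Dual K (P →ₗ[Λ] L)) (l : L) (g : P →ₗ[Λ] Λ) :
    dualHomToNu K Λ P L ξ l g = ξ (g.smulRight l) := rfl

lemma dualHomToNu_injective [Module.Finite Λ P] [Module.Projective Λ P] :
    Function.Injective (dualHomToNu K Λ P L) := by
  obtain ⟨n, p, g, hpg⟩ := exists_finite_dual_basis (R := Λ) (P := P)
  intro ξ η h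
  ext u
  rw [← sum_smulRight_dual_basis hpg u, map_sum, map_sum]
  exact Finset.sum_congr rfl fun i _ =>
    LinearMap.congr_fun (LinearMap.congr_fun h (u (p i))) (g i)

lemma dualHomToNu_surjective [Module.Finite Λ P] [Module.Projective Λ P] :
    Function.Surjective (dualHomToNu K Λ P L) := by
  obtain ⟨n, p, g, hpg⟩ := exists_finite_dual_basis (R := Λ) (P := P)
  intro u
  let ξ : Dual K (P →ₗ[Λ] L) :=
    ∑ i, applyₗ (g i) ∘ₗ u.restrictScalars K ∘ₗ applyₗ' K (p i)
  refine ⟨ξ, ?_⟩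
  ext l h
  have expand_h : ∑ i, rmul K Λ P (h (p i)) (g i) = h := sum_smulRight_dual_basis hpg h
  calc dualHomToNu K Λ P L ξ l h = ∑ i, u (h (p i) • l) (g i) := by
        simp [dualHomToNu_apply, ξ]
    _ = ∑ i, u l (rmul K Λ P (h (p i)) (g i)) := by simp only [map_smul, nu_smul_apply]
    _ = u l h := by rw [← map_sum, expand_h]

/-- The isomorphism `D Hom_Λ(P, L) ≃ Hom_Λ(L, νP)` for `P` finitely generated projective, where `D`
is the `K`-linear dual. -/
noncomputable def dualHomEquivHomNu [Module.Finite Λ P] [Module.Projective Λ P] :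
    Dual K (P →ₗ[Λ] L) ≃ₗ[K] (L →ₗ[Λ] Nu K Λ P) :=
  LinearEquiv.ofBijective (dualHomToNu K Λ P L)
    ⟨dualHomToNu_injective K Λ P L, dualHomToNu_surjective K Λ P L⟩

end Nakayama

section NakayamaMap

variable (P₁ P₀ : Type*) [AddCommGroup P₁] [Module Λ P₁] [AddCommGroup P₀] [Module Λ P₀]
  (f : P₁ →ₗ[Λ] P₀)
  (L : Type*) [AddCommGroup L] [Module Λ L] [Module K L] [IsScalarTower K Λ L]

lemma compRight_nuMap_comp_dualHomToNu :
    (nuMap K Λ P₁ P₀ f).compRight K ∘ₗ dualHomToNu K Λ P₁ L =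
      dualHomToNu K Λ P₀ L ∘ₗ (lcomp K L f).dualMap := rfl

variable [Module.Finite Λ P₁] [Module.Projective Λ P₁]
  [Module.Finite Λ P₀] [Module.Projective Λ P₀]

lemma comap_ker_compRight_nuMap :
    (ker ((nuMap K Λ P₁ P₀ f).compRight K)).comap (dualHomEquivHomNu K Λ P₁ L).toLinearMap =
      (range (lcomp K L f)).dualAnnihilator := by
  have ker_dualHomToNu : ker (dualHomToNu K Λ P₀ L) = ⊥ :=
    ker_eq_bot_of_injective (dualHomToNu_injective K Λ P₀ L)
  calc (ker ((nuMap K Λ P₁ P₀ f).compRight K)).comap (dualHomEquivHomNu K Λ P₁ L).toLinearMap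
      = ker ((nuMap K Λ P₁ P₀ f).compRight K ∘ₗ dualHomToNu K Λ P₁ L) := rfl
    _ = ker (dualHomToNu K Λ P₀ L ∘ₗ (lcomp K L f).dualMap) := by
        rw [compRight_nuMap_comp_dualHomToNu]
    _ = ker (lcomp K L f).dualMap := ker_comp_of_ker_eq_bot _ ker_dualHomToNu
    _ = (range (lcomp K L f)).dualAnnihilator := ker_dualMap_eq_dualAnnihilator_range _

/-- `Hom_Λ(L, ker νf)` is the `K`-linear dual of the cokernel of `Hom_Λ(f, L)`. -/
noncomputable def homKerNuMapEquiv :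
    (L →ₗ[Λ] ker (nuMap K Λ P₁ P₀ f)) ≃ₗ[K]
      Dual K ((P₁ →ₗ[Λ] L) ⧸ range (lcomp K L f)) :=
  homKerEquiv K L (nuMap K Λ P₁ P₀ f) ≪≫ₗ
    ((dualHomEquivHomNu K Λ P₁ L).ofSubmodule' (ker ((nuMap K Λ P₁ P₀ f).compRight K))).symm ≪≫ₗ
    LinearEquiv.ofEq _ _ (comap_ker_compRight_nuMap K Λ P₁ P₀ f L) ≪≫ₗ
    (range (lcomp K L f)).dualQuotEquivDualAnnihilator.symm

theorem index_lcomp_eq_finrank_sub_finrank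
    (X : Type*) [AddCommGroup X] [Module Λ X] (q : P₀ →ₗ[Λ] X) (hq : Function.Surjective q)
    (hfq : Function.Exact f q) :
    (lcomp K L f).index = (finrank K (X →ₗ[Λ] L) : ℤ)
      - finrank K (L →ₗ[Λ] ker (nuMap K Λ P₁ P₀ f)) := by
  have finrank_ker : finrank K (ker (lcomp K L f)) = finrank K (X →ₗ[Λ] L) := by
    rw [(exact_lcomp_lcomp K L hfq hq).linearMap_ker_eq]
    exact finrank_range_of_inj (lcomp_injective_of_surjective q hq)
  have finrank_coker : finrank K ((P₁ →ₗ[Λ] L) ⧸ range (lcomp K L f)) =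
      finrank K (L →ₗ[Λ] ker (nuMap K Λ P₁ P₀ f)) := by
    rw [(homKerNuMapEquiv K Λ P₁ P₀ f L).finrank_eq, Subspace.dual_finrank_eq]
  rw [index_eq_finrank_sub, finrank_ker, finrank_coker]

end NakayamaMap

theorem stmt1_general
    (P₁ P₀ : Type*) [AddCommGroup P₁] [Module Λ P₁]
    [Module.Finite Λ P₁] [Module.Projective Λ P₁]
    [AddCommGroup P₀] [Module Λ P₀] [Module.Finite Λ P₀] [Module.Projective Λ P₀]
    (f : P₁ →ₗ[Λ] P₀)
    (X : Type*) [AddCommGroup X] [Module Λ X]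
    (q : P₀ →ₗ[Λ] X) (hq : Function.Surjective q)
    (hqf : LinearMap.ker q = LinearMap.range f)
    (L : Type*) [AddCommGroup L] [Module Λ L] [Module K L] [IsScalarTower K Λ L]
    [FiniteDimensional K L] :
    (Module.finrank K (P₀ →ₗ[Λ] L) : ℤ) - Module.finrank K (P₁ →ₗ[Λ] L)
      = (Module.finrank K (X →ₗ[Λ] L) : ℤ)
        - Module.finrank K (L →ₗ[Λ] ↥(LinearMap.ker (nuMap K Λ P₁ P₀ f))) := by
  have := isNoetherian_hom_of_finite (R := Λ) (P := P₀) K L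
  have := isNoetherian_hom_of_finite (R := Λ) (P := P₁) K L
  rw [← index_eq_of_finiteDimensional (f := lcomp K L f)]
  exact index_lcomp_eq_finrank_sub_finrank K Λ P₁ P₀ f L X q hq (exact_iff.2 hqf)

/-- **Lemma `interp`.** Let `K` be a field and `Λ` a finite-dimensional `K`-algebra.
Let `f : P₁ → P₀` be a homomorphism of finitely generated projective left `Λ`-modules,
let `X = coker f` (presented by a surjection `q : P₀ → X` with `ker q = range f`),
and let `T = ker (νf : νP₁ → νP₀)`.  Then for every finite-dimensional left `Λ`-module `L`,
`dim Hom(P₀, L) - dim Hom(P₁, L) = dim Hom(X, L) - dim Hom(L, T)`. -/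
theorem stmt1 [FiniteDimensional K Λ]
    (P₁ P₀ : Type*) [AddCommGroup P₁] [Module Λ P₁]
    [Module.Finite Λ P₁] [Module.Projective Λ P₁]
    [AddCommGroup P₀] [Module Λ P₀] [Module.Finite Λ P₀] [Module.Projective Λ P₀]
    (f : P₁ →ₗ[Λ] P₀)
    (X : Type*) [AddCommGroup X] [Module Λ X]
    (q : P₀ →ₗ[Λ] X) (hq : Function.Surjective q)
    (hqf : LinearMap.ker q = LinearMap.range f)
    (L : Type*) [AddCommGroup L] [Module Λ L] [Module K L] [IsScalarTower K Λ L]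
    [SMulCommClass Λ K L] [FiniteDimensional K L] :
    (Module.finrank K (P₀ →ₗ[Λ] L) : ℤ) - Module.finrank K (P₁ →ₗ[Λ] L)
      = (Module.finrank K (X →ₗ[Λ] L) : ℤ)
        - Module.finrank K (L →ₗ[Λ] ↥(LinearMap.ker (nuMap K Λ P₁ P₀ f))) :=
  stmt1_general K Λ P₁ P₀ f X q hq hqf L
end

section
/- Let K be a field and Λ a finite-dimensional associative unital K-algebra. For every finitely generated projective left Λ-module P and every left Λ-module L, there is a K-linear isomorphism Hom_Λ(L, νP) ≅ Hom_K(Hom_Λ(P, L), K), natural in L. -/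
open LinearMap Module

variable (K Λ : Type*) [Field K] [Ring Λ] [Algebra K Λ]

universe v

/-!
For every `P` there is a canonical map `Hom_K(Hom_Λ(P, L), K) → Hom_Λ(L, νP)`, natural in `L`,
sending `χ` to `l ↦ (c ↦ χ(p ↦ c(p) • l))`. If `P` is finitely generated projective, a finite
dual basis `(x i, c i)` expands every `h : P → L` as `∑ i, c i(·) • h(x i)`. Hence `χ` is determined
by its image, and `h ↦ ∑ i, ψ(h(x i))(c i)` is a preimage of `ψ`; the isomorphism sought is the
inverse of the canonical map.
-/

lemma comp_smulRight {R P M N : Type*} [Semiring R] [AddCommMonoid P] [Module R P]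
    [AddCommMonoid M] [Module R M] [AddCommMonoid N] [Module R N]
    (g : M →ₗ[R] N) (c : P →ₗ[R] R) (m : M) : g ∘ₗ c.smulRight m = c.smulRight (g m) := by
  ext p
  simp

section DualBasis

variable {R P M ι : Type*} [Semiring R] [AddCommMonoid P] [Module R P]
  [AddCommMonoid M] [Module R M] [Fintype ι]

/-- Vectors `x i` and functionals `c i` form a finite dual basis of `P`, in the sense of the dual
basis lemma for projective modules: the `c i` provide coordinates with respect to the `x i`, which
generate `P` but need not be linearly independent (unlike in `Module.DualBases`). -/
def IsDualBasis (x : ι → P) (c : ι → P →ₗ[R] R) : Prop :=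
  ∀ p, ∑ i, c i p • x i = p

lemma IsDualBasis.sum_smulRight_apply {x : ι → P} {c : ι → P →ₗ[R] R} (hxc : IsDualBasis x c)
    (h : P →ₗ[R] M) : ∑ i, (c i).smulRight (h (x i)) = h := by
  ext p
  calc (∑ i, (c i).smulRight (h (x i))) p
      = h (∑ i, c i p • x i) := by simp
    _ = h p := by rw [hxc p]

variable (R P) in
lemma exists_isDualBasis [Module.Finite R P] [Module.Projective R P] :
    ∃ (n : ℕ) (x : Fin n → P) (c : Fin n → P →ₗ[R] R), IsDualBasis x c := by
  obtain ⟨n, f, s, -, -, hfs⟩ := Module.Finite.exists_comp_eq_id_of_projective R P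
  refine ⟨n, fun i ↦ f (Pi.single i 1), fun i ↦ LinearMap.proj i ∘ₗ s, fun p ↦ ?_⟩
  calc ∑ i, s p i • f (Pi.single i 1)
      = f (∑ i, s p i • Pi.single i 1) := by simp only [map_sum, map_smul]
    _ = f (s p) := by rw [← pi_eq_sum_univ' (s p)]
    _ = p := LinearMap.congr_fun hfs p

end DualBasis

section NuHom

variable (P : Type*) [AddCommGroup P] [Module Λ P]

lemma rmul_eq_smulRight (a : Λ) (c : P →ₗ[Λ] Λ) : rmul K Λ P a c = c.smulRight a := rfl

lemma rmul_smulRight {M : Type*} [AddCommMonoid M] [Module Λ M] (a : Λ) (c : P →ₗ[Λ] Λ) (m : M) :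
    (rmul K Λ P a c).smulRight m = c.smulRight (a • m) := by
  ext p
  simp [mul_smul]

variable (L : Type*) [AddCommGroup L] [Module Λ L] [Module K L]
  [IsScalarTower K Λ L] [SMulCommClass Λ K L]

/-- The canonical map `Hom_K(Hom_Λ(P, L), K) → Hom_Λ(L, νP)`, defined for every `P`. It is dual to
the pairing of `c : Hom_Λ(P, Λ)` with `l : L` to the homomorphism `p ↦ c(p) • l`. -/
def dualHomToNuHom : Dual K (P →ₗ[Λ] L) →ₗ[K] (L →ₗ[Λ] Nu K Λ P) where
  toFun χ :=
    { toFun := fun l ↦ χ ∘ₗ compRight K (toSpanSingleton Λ L l)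
      map_add' := fun l m ↦ by
        ext c
        simp [toSpanSingleton_add, add_comp]
      map_smul' := fun a l ↦ by
        ext c
        exact congrArg χ (rmul_smulRight K Λ P a c l).symm }
  map_add' _ _ := rfl
  map_smul' _ _ := rfl

variable {L}

@[simp] lemma dualHomToNuHom_apply (χ : Dual K (P →ₗ[Λ] L)) (l : L) (c : P →ₗ[Λ] Λ) :
    dualHomToNuHom K Λ P L χ l c = χ (c.smulRight l) := rfl

lemma dualHomToNuHom_comp_compRight {L' : Type*} [AddCommGroup L'] [Module Λ L'] [Module K L']
    [IsScalarTower K Λ L'] [SMulCommClass Λ K L'] (χ : Dual K (P →ₗ[Λ] L')) (g : L →ₗ[Λ] L') :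
    dualHomToNuHom K Λ P L (χ ∘ₗ compRight K g) = dualHomToNuHom K Λ P L' χ ∘ₗ g := by
  ext l c
  exact congrArg χ (comp_smulRight g c l)

variable {P} {ι : Type*} [Fintype ι] {x : ι → P} {c : ι → P →ₗ[Λ] Λ}

lemma IsDualBasis.dualHomToNuHom_injective (hxc : IsDualBasis x c) :
    Function.Injective (dualHomToNuHom K Λ P L) := by
  intro χ χ' hχ
  ext h
  have agree (i : ι) : χ ((c i).smulRight (h (x i))) = χ' ((c i).smulRight (h (x i))) :=
    LinearMap.congr_fun (LinearMap.congr_fun hχ (h (x i))) (c i)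
  rw [← hxc.sum_smulRight_apply h, map_sum, map_sum]
  exact Finset.sum_congr rfl fun i _ ↦ agree i

lemma IsDualBasis.dualHomToNuHom_surjective (hxc : IsDualBasis x c) :
    Function.Surjective (dualHomToNuHom K Λ P L) := by
  intro ψ
  refine ⟨∑ i, applyₗ (c i) ∘ₗ ψ.restrictScalars K ∘ₗ applyₗ' K (x i), ?_⟩
  ext l d
  calc dualHomToNuHom K Λ P L (∑ i, applyₗ (c i) ∘ₗ ψ.restrictScalars K ∘ₗ applyₗ' K (x i)) l d
      = ∑ i, ψ (d (x i) • l) (c i) := by simp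
    _ = ∑ i, ψ l ((c i).smulRight (d (x i))) := by
      simp only [map_smul, nu_smul_apply, rmul_eq_smulRight]
    _ = ψ l d := by rw [← map_sum, hxc.sum_smulRight_apply d]

variable (P L) [Module.Finite Λ P] [Module.Projective Λ P]

lemma dualHomToNuHom_bijective : Function.Bijective (dualHomToNuHom K Λ P L) := by
  obtain ⟨n, x, c, hxc⟩ := exists_isDualBasis Λ P
  exact ⟨hxc.dualHomToNuHom_injective K Λ, hxc.dualHomToNuHom_surjective K Λ⟩

/-- The isomorphism `Hom_Λ(L, νP) ≃ Hom_K(Hom_Λ(P, L), K)` for `P` finitely generated projective,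
taken as the inverse of the canonical map so that it depends on no choice of dual basis. -/
noncomputable def nuHomEquivDualHom : (L →ₗ[Λ] Nu K Λ P) ≃ₗ[K] Dual K (P →ₗ[Λ] L) :=
  (LinearEquiv.ofBijective _ (dualHomToNuHom_bijective K Λ P L)).symm

variable {L}

lemma nuHomEquivDualHom_comp {L' : Type*} [AddCommGroup L'] [Module Λ L'] [Module K L']
    [IsScalarTower K Λ L'] [SMulCommClass Λ K L'] (g : L →ₗ[Λ] L') (ψ : L' →ₗ[Λ] Nu K Λ P) :
    nuHomEquivDualHom K Λ P L (ψ ∘ₗ g) = nuHomEquivDualHom K Λ P L' ψ ∘ₗ compRight K g := by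
  obtain ⟨χ, rfl⟩ := (nuHomEquivDualHom K Λ P L').symm.surjective ψ
  rw [LinearEquiv.apply_symm_apply, ← LinearEquiv.eq_symm_apply]
  exact (dualHomToNuHom_comp_compRight K Λ P χ g).symm

end NuHom

theorem stmt3_general
    (P : Type*) [AddCommGroup P] [Module Λ P] [Module.Finite Λ P] [Module.Projective Λ P] :
    ∃ e : ∀ (L : Type v) [AddCommGroup L] [Module Λ L] [Module K L]
        [IsScalarTower K Λ L] [SMulCommClass Λ K L],
        (L →ₗ[Λ] Nu K Λ P) ≃ₗ[K] ((P →ₗ[Λ] L) →ₗ[K] K),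
      ∀ (L L' : Type v)
        [AddCommGroup L] [Module Λ L] [Module K L]
        [IsScalarTower K Λ L] [SMulCommClass Λ K L]
        [AddCommGroup L'] [Module Λ L'] [Module K L']
        [IsScalarTower K Λ L'] [SMulCommClass Λ K L']
        (g : L →ₗ[Λ] L') (ψ : L' →ₗ[Λ] Nu K Λ P) (h : P →ₗ[Λ] L),
        e L (ψ.comp g) h = e L' ψ (g.comp h) :=
  ⟨fun L ↦ nuHomEquivDualHom K Λ P L, by
    intro L L' _ _ _ _ _ _ _ _ _ _ g ψ h
    exact LinearMap.congr_fun (nuHomEquivDualHom_comp K Λ P g ψ) h⟩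

/-- **Tensor-hom/duality isomorphism.**  For every finitely generated projective left
`Λ`-module `P` and every left `Λ`-module `L` there is a `K`-linear isomorphism
`Hom_Λ(L, νP) ≅ Hom_K(Hom_Λ(P, L), K)`, natural in `L`. -/
theorem stmt3 [FiniteDimensional K Λ]
    (P : Type*) [AddCommGroup P] [Module Λ P] [Module.Finite Λ P] [Module.Projective Λ P] :
    ∃ e : ∀ (L : Type v) [AddCommGroup L] [Module Λ L] [Module K L]
        [IsScalarTower K Λ L] [SMulCommClass Λ K L],
        (L →ₗ[Λ] Nu K Λ P) ≃ₗ[K] ((P →ₗ[Λ] L) →ₗ[K] K),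
      ∀ (L L' : Type v)
        [AddCommGroup L] [Module Λ L] [Module K L]
        [IsScalarTower K Λ L] [SMulCommClass Λ K L]
        [AddCommGroup L'] [Module Λ L'] [Module K L']
        [IsScalarTower K Λ L'] [SMulCommClass Λ K L']
        (g : L →ₗ[Λ] L') (ψ : L' →ₗ[Λ] Nu K Λ P) (h : P →ₗ[Λ] L),
        e L (ψ.comp g) h = e L' ψ (g.comp h) :=
  stmt3_general K Λ P
end

section
/- Let K be a field and Λ a finite-dimensional associative unital K-algebra. Let X, T, M be finite-dimensional left Λ-modules with Hom_Λ(X, T) = 0. Then the following are equivalent: (i) dim_K Hom_Λ(X, M) = dim_K Hom_Λ(M, T), and for every Λ-submodule M' ⊆ M one has dim_K Hom_Λ(X, M') ≤ dim_K Hom_Λ(M', T); (ii) Hom_Λ(X, M) = 0 and Hom_Λ(M, T) = 0. (When X is indecomposable τ-rigid and T = τX, condition (i) says that M is semistable with respect to the g-vector g_X, and condition (ii) says that M lies in the τ-perpendicular category J(X); this is the paper's Lemma 'equiv', i.e. Proposition 3.13 of Brüstle–Smith–Treffinger.) -/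
open Module

/-!
Let `N ⊆ M` be the trace of `X` in `M`, the sum of the images of all homomorphisms `X → M`. Every
such homomorphism factors through `N`, so `Hom(X, N) = Hom(X, M)`, while a homomorphism `N → T` is
determined by its composites with homomorphisms `X → N`, so `Hom(X, T) = 0` forces `Hom(N, T) = 0`.
The inequality for `M' = N` therefore reads `dim Hom(X, M) ≤ 0`, and the equality of
dimensions then gives `Hom(M, T) = 0`.
-/

instance finite_linearMap_of_isNoetherian {K Λ X M : Type*} [Ring K] [Semiring Λ]
    [AddCommMonoid X] [Module Λ X] [Module.Finite Λ X]
    [AddCommGroup M] [Module Λ M] [Module K M] [SMulCommClass Λ K M] [IsNoetherian K M] :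
    Module.Finite K (X →ₗ[Λ] M) := by
  obtain ⟨n, s, hs⟩ := Module.Finite.exists_fin (R := Λ) (M := X)
  let evalGenerators : (X →ₗ[Λ] M) →ₗ[K] (Fin n → M) :=
    LinearMap.pi fun i => LinearMap.applyₗ' K (s i)
  have evalGenerators_injective : Function.Injective evalGenerators := fun _ _ h =>
    LinearMap.ext_on_range hs (congrFun h)
  exact Module.Finite.of_injective evalGenerators evalGenerators_injective

theorem subsingleton_linearMap_submodule {Λ X M : Type*} [Semiring Λ]
    [AddCommMonoid X] [Module Λ X] [AddCommMonoid M] [Module Λ M]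
    [Subsingleton (X →ₗ[Λ] M)] (N : Submodule Λ M) : Subsingleton (X →ₗ[Λ] N) :=
  ⟨fun f g => (LinearMap.cancel_left N.injective_subtype).mp
    (Subsingleton.elim (N.subtype ∘ₗ f) (N.subtype ∘ₗ g))⟩

section Trace

variable {Λ X M T : Type*} [Semiring Λ] [AddCommMonoid X] [Module Λ X]
  [AddCommMonoid M] [Module Λ M] [AddCommMonoid T] [Module Λ T]

variable (Λ X M) in
/-- The trace of `X` in `M`: the sum of the images of all homomorphisms from `X` to `M`. It is the
submodule at which the semistability inequality detects whether `Hom(X, M)` vanishes. -/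
def traceSubmodule : Submodule Λ M :=
  ⨆ f : X →ₗ[Λ] M, LinearMap.range f

theorem apply_mem_traceSubmodule (f : X →ₗ[Λ] M) (x : X) : f x ∈ traceSubmodule Λ X M :=
  Submodule.mem_iSup_of_mem f (LinearMap.mem_range_self f x)

variable (Λ X M) in
/-- The identification of `Hom(X, N)` with `Hom(X, M)` for `N` the trace of `X` in `M`, given by
composition with the inclusion of `N`. -/
noncomputable def linearMapTraceSubmoduleEquiv (K : Type*) [Semiring K] [SMul K Λ] [Module K M]
    [IsScalarTower K Λ M] [SMulCommClass Λ K M] :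
    (X →ₗ[Λ] traceSubmodule Λ X M) ≃ₗ[K] (X →ₗ[Λ] M) :=
  LinearEquiv.ofBijective (LinearMap.compRight K (traceSubmodule Λ X M).subtype)
    ⟨fun _ _ h => (LinearMap.cancel_left (Submodule.injective_subtype _)).mp h,
      fun f => ⟨f.codRestrict _ (apply_mem_traceSubmodule f),
        LinearMap.subtype_comp_codRestrict _ _ _⟩⟩

theorem linearMap_traceSubmodule_ext {g h : traceSubmodule Λ X M →ₗ[Λ] T}
    (hgh : ∀ f : X →ₗ[Λ] traceSubmodule Λ X M, g ∘ₗ f = h ∘ₗ f) : g = h := by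
  have trace_le : traceSubmodule Λ X M ≤
      (LinearMap.eqLocus g h).map (traceSubmodule Λ X M).subtype := by
    refine iSup_le fun f => ?_
    rintro _ ⟨x, rfl⟩
    exact ⟨⟨f x, apply_mem_traceSubmodule f x⟩,
      LinearMap.congr_fun (hgh (f.codRestrict _ (apply_mem_traceSubmodule f))) x, rfl⟩
  ext ⟨m, hm⟩
  obtain ⟨n, hn, rfl⟩ := trace_le hm
  exact hn

theorem subsingleton_traceSubmodule_linearMap [Subsingleton (X →ₗ[Λ] T)] :
    Subsingleton (traceSubmodule Λ X M →ₗ[Λ] T) :=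
  ⟨fun _ _ => linearMap_traceSubmodule_ext fun _ => Subsingleton.elim _ _⟩

end Trace

section Semistable

variable {K Λ X T M : Type*} [DivisionRing K] [Semiring Λ] [SMul K Λ]
  [AddCommMonoid X] [Module Λ X]
  [AddCommGroup M] [Module Λ M] [Module K M] [IsScalarTower K Λ M] [SMulCommClass Λ K M]
  [Module.Finite K (X →ₗ[Λ] M)]

theorem subsingleton_linearMap_of_finrank_traceSubmodule_le
    [AddCommMonoid T] [Module Λ T] [Module K T] [SMulCommClass Λ K T] [Subsingleton (X →ₗ[Λ] T)]
    (hle : finrank K (X →ₗ[Λ] traceSubmodule Λ X M) ≤ finrank K (traceSubmodule Λ X M →ₗ[Λ] T)) :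
    Subsingleton (X →ₗ[Λ] M) := by
  have : Subsingleton (traceSubmodule Λ X M →ₗ[Λ] T) := subsingleton_traceSubmodule_linearMap
  refine (finrank_zero_iff (R := K)).mp (Nat.le_zero.mp ?_)
  calc finrank K (X →ₗ[Λ] M)
      = finrank K (X →ₗ[Λ] traceSubmodule Λ X M) :=
        (linearMapTraceSubmoduleEquiv Λ X M K).finrank_eq.symm
    _ ≤ finrank K (traceSubmodule Λ X M →ₗ[Λ] T) := hle
    _ = 0 := finrank_zero_of_subsingleton

theorem stmt4_general
    [AddCommGroup T] [Module Λ T] [Module K T] [SMulCommClass Λ K T] [Module.Finite K (M →ₗ[Λ] T)]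
    (hXT : ∀ f : X →ₗ[Λ] T, f = 0) :
    (finrank K (X →ₗ[Λ] M) = finrank K (M →ₗ[Λ] T) ∧
        ∀ M' : Submodule Λ M, finrank K (X →ₗ[Λ] M') ≤ finrank K (M' →ₗ[Λ] T))
      ↔ ((∀ f : X →ₗ[Λ] M, f = 0) ∧ (∀ f : M →ₗ[Λ] T, f = 0)) := by
  simp only [← subsingleton_iff_forall_eq] at hXT ⊢
  constructor
  · rintro ⟨heq, hle⟩
    have hXM : Subsingleton (X →ₗ[Λ] M) :=
      subsingleton_linearMap_of_finrank_traceSubmodule_le (hle (traceSubmodule Λ X M))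
    rw [finrank_zero_of_subsingleton] at heq
    exact ⟨hXM, finrank_zero_iff.mp heq.symm⟩
  · rintro ⟨hXM, hMT⟩
    refine ⟨by rw [finrank_zero_of_subsingleton, finrank_zero_of_subsingleton], fun M' => ?_⟩
    have : Subsingleton (X →ₗ[Λ] M') := subsingleton_linearMap_submodule M'
    exact finrank_zero_of_subsingleton.trans_le (Nat.zero_le _)

end Semistable

/-- **Lemma `equiv`** (Proposition 3.13 of Brüstle–Smith–Treffinger, reformulated).
Let `K` be a field, `Λ` a finite-dimensional `K`-algebra, and `X, T, M`
finite-dimensional left `Λ`-modules with `Hom_Λ(X, T) = 0`.  Then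
`dim Hom(X, M) = dim Hom(M, T)` together with `dim Hom(X, M') ≤ dim Hom(M', T)` for all
submodules `M' ⊆ M` holds if and only if `Hom(X, M) = 0` and `Hom(M, T) = 0`. -/
theorem stmt4 (K Λ : Type*) [Field K] [Ring Λ] [Algebra K Λ] [FiniteDimensional K Λ]
    (X T M : Type*)
    [AddCommGroup X] [Module Λ X] [Module K X] [IsScalarTower K Λ X]
    [SMulCommClass Λ K X] [FiniteDimensional K X]
    [AddCommGroup T] [Module Λ T] [Module K T] [IsScalarTower K Λ T]
    [SMulCommClass Λ K T] [FiniteDimensional K T]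
    [AddCommGroup M] [Module Λ M] [Module K M] [IsScalarTower K Λ M]
    [SMulCommClass Λ K M] [FiniteDimensional K M]
    (hXT : ∀ f : X →ₗ[Λ] T, f = 0) :
    (finrank K (X →ₗ[Λ] M) = finrank K (M →ₗ[Λ] T) ∧
        ∀ M' : Submodule Λ M,
          finrank K (X →ₗ[Λ] ↥M') ≤ finrank K (↥M' →ₗ[Λ] T))
      ↔ ((∀ f : X →ₗ[Λ] M, f = 0) ∧ (∀ f : M →ₗ[Λ] T, f = 0)) := by
  have : Module.Finite Λ X := .of_restrictScalars_finite K Λ X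
  have : Module.Finite Λ M := .of_restrictScalars_finite K Λ M
  exact stmt4_general hXT
end

section
/- Let K be a field, Λ a finite-dimensional associative unital K-algebra, X a nonzero finite-dimensional indecomposable left Λ-module, and N a left Λ-module with Hom_Λ(X, N) = 0. Set B = X / Σ_{f ∈ rad(X,X)} im(f), where rad(X,X) ⊆ End_Λ(X) is the set of non-invertible endomorphisms of X. Then Hom_Λ(B, N) = 0 and Hom_Λ(X, B) ≠ 0; in particular, if N is finite-dimensional then dim_K Hom_Λ(X, B) > dim_K Hom_Λ(B, N). (When X is τ-rigid and N = τX, this is the fact g_X · dim β(X) > 0 used in the proof of the paper's Proposition on linear independence of dimension vectors.) -/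
open Module

/-! Since `X` is indecomposable of finite length, Fitting's lemma makes `E = End_Λ(X)` a local
ring, so `rad(X, X)` lies in the Jacobson radical `J` of `E`. As `X` is finitely generated over
`E`, Nakayama's lemma gives `Σ im f ⊆ J X ≠ X`. Thus the projection `X → B` is a nonzero map,
while every map `B → N` vanishes because its composite with this projection does. -/

section LocalRing

variable {R : Type*} [Ring R] [IsLocalRing R]

theorem isDedekindFiniteMonoid_of_isLocalRing : IsDedekindFiniteMonoid R where
  mul_eq_one_symm {a b} hab := by
    have hidem : IsIdempotentElem (b * a) := by
      rw [IsIdempotentElem, mul_assoc, ← mul_assoc a, hab, one_mul]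
    rcases IsLocalRing.isUnit_or_isUnit_of_add_one (add_sub_cancel (b * a) 1) with hunit | hunit
    · exact (IsIdempotentElem.iff_eq_one_of_isUnit hunit).mp hidem
    · have hba : b * a = 0 :=
        sub_eq_self.mp ((IsIdempotentElem.iff_eq_one_of_isUnit hunit).mp hidem.one_sub)
      have : (1 : R) = 0 := calc
        1 = a * b * (a * b) := by rw [hab, one_mul]
        _ = a * (b * a) * b := by simp only [mul_assoc]
        _ = 0 := by rw [hba, mul_zero, zero_mul]
      exact absurd this one_ne_zero

theorem mem_jacobson_of_not_isUnit {x : R} (hx : ¬ IsUnit x) : x ∈ Ring.jacobson R := by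
  have : IsDedekindFiniteMonoid R := isDedekindFiniteMonoid_of_isLocalRing
  rw [Ring.jacobson_eq_sInf_isMaximal, Submodule.mem_sInf]
  intro (m : Ideal R) (hm : m.IsMaximal)
  by_contra hxm
  obtain ⟨y, a, ha, hya⟩ := hm.exists_inv hxm
  rcases IsLocalRing.isUnit_or_isUnit_of_add_one hya with hyx | ha_unit
  · exact hx (isUnit_of_mul_isUnit_right hyx)
  · exact hm.ne_top (m.eq_top_of_isUnit_mem ha ha_unit)

end LocalRing

section Endomorphism

variable {R X : Type*} [Ring R] [AddCommGroup X] [Module R X]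

theorem isUnit_or_isNilpotent_of_indecomposable [IsNoetherian R X] [IsArtinian R X]
    (hind : ∀ A B : Submodule R X, IsCompl A B → A = ⊥ ∨ B = ⊥) (f : End R X) :
    IsUnit f ∨ IsNilpotent f := by
  obtain ⟨k, hcompl, hk⟩ := (f.eventually_isCompl_ker_pow_range_pow.and
    (Filter.eventually_ne_atTop 0)).exists
  rcases hind _ _ hcompl with hker | hrange
  · have hinj : Function.Injective (f ^ k) := LinearMap.ker_eq_bot.mp hker
    have hunit : IsUnit (f ^ k) :=
      (End.isUnit_iff _).mpr (IsArtinian.bijective_of_injective_endomorphism _ hinj)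
    exact .inl ((isUnit_pow_iff hk).mp hunit)
  · exact .inr ⟨k, LinearMap.range_eq_bot.mp hrange⟩

theorem isLocalRing_end_of_indecomposable [IsNoetherian R X] [IsArtinian R X] [Nontrivial X]
    (hind : ∀ A B : Submodule R X, IsCompl A B → A = ⊥ ∨ B = ⊥) : IsLocalRing (End R X) :=
  .of_isUnit_or_isUnit_one_sub_self fun f ↦
    (isUnit_or_isNilpotent_of_indecomposable hind f).imp_right IsNilpotent.isUnit_one_sub

variable (R X) in
/-- The submodule `Σ_{f ∈ rad(X, X)} im(f)` of `X`, where `rad(X, X)` is encoded as the set of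
non-units of the endomorphism ring; the quotient by it is `β(X)`. -/
def radicalImage : Submodule R X :=
  ⨆ f ∈ {f : End R X | ¬ IsUnit f}, LinearMap.range f

theorem mem_jacobson_smul_top_of_mem_radicalImage [IsLocalRing (End R X)] {x : X}
    (hx : x ∈ radicalImage R X) :
    x ∈ Ring.jacobson (End R X) • (⊤ : Submodule (End R X) X) := by
  -- `J X` is a priori only an `End R X`-submodule, so the inclusion is one of additive submonoids.
  suffices h : (radicalImage R X).toAddSubmonoid ≤
      (Ring.jacobson (End R X) • (⊤ : Submodule (End R X) X)).toAddSubmonoid from h hx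
  simp only [radicalImage, Submodule.iSup_toAddSubmonoid]
  refine iSup₂_le fun f hf ↦ ?_
  rintro _ ⟨y, rfl⟩
  exact Submodule.smul_mem_smul (mem_jacobson_of_not_isUnit hf) Submodule.mem_top

theorem radicalImage_ne_top [IsLocalRing (End R X)] [Module.Finite (End R X) X] :
    radicalImage R X ≠ ⊤ := by
  have : Nontrivial X :=
    not_subsingleton_iff_nontrivial.mp fun _ ↦ not_subsingleton (End R X) inferInstance
  intro htop
  refine (Submodule.jacobson_smul_lt_top (⊤ : Submodule (End R X) X)).ne
    (eq_top_iff.mpr fun x _ ↦ mem_jacobson_smul_top_of_mem_radicalImage ?_)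
  exact htop ▸ Submodule.mem_top

end Endomorphism

section Quotient

variable {R X : Type*} [Ring R] [AddCommGroup X] [Module R X]

theorem quotient_linearMap_eq_zero (P : Submodule R X) {N : Type*} [AddCommGroup N] [Module R N]
    (hXN : ∀ f : X →ₗ[R] N, f = 0) (g : (X ⧸ P) →ₗ[R] N) : g = 0 :=
  P.linearMap_qext (by rw [hXN (g ∘ₗ P.mkQ), LinearMap.zero_comp])

theorem mkQ_ne_zero_of_ne_top {P : Submodule R X} (hP : P ≠ ⊤) : P.mkQ ≠ 0 := fun h ↦
  hP (by rw [← P.ker_mkQ, h, LinearMap.ker_zero])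

end Quotient

theorem finite_linearMap_of_tower (K A V W : Type*) [CommRing K] [IsNoetherianRing K] [Ring A]
    [Algebra K A] [AddCommGroup V] [Module A V] [Module K V] [IsScalarTower K A V]
    [AddCommGroup W] [Module A W] [Module K W] [IsScalarTower K A W]
    [Module.Finite K V] [Module.Finite K W] : Module.Finite K (V →ₗ[A] W) :=
  .of_injective (LinearMap.restrictScalarsₗ K A V W K) (LinearMap.restrictScalars_injective K)

theorem stmt9_general (K Λ : Type*) [Field K] [Ring Λ] [Algebra K Λ]
    (X : Type*) [AddCommGroup X] [Module Λ X] [Module K X] [IsScalarTower K Λ X]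
    [FiniteDimensional K X] [Nontrivial X]
    (hind : ∀ A B : Submodule Λ X, IsCompl A B → A = ⊥ ∨ B = ⊥)
    (N : Type*) [AddCommGroup N] [Module Λ N] [Module K N] [SMulCommClass Λ K N]
    (hXN : ∀ f : X →ₗ[Λ] N, f = 0) :
    (∀ g : (X ⧸ radicalImage Λ X) →ₗ[Λ] N, g = 0) ∧
    (∃ h : X →ₗ[Λ] (X ⧸ radicalImage Λ X), h ≠ 0) ∧
    finrank K ((X ⧸ radicalImage Λ X) →ₗ[Λ] N) < finrank K (X →ₗ[Λ] (X ⧸ radicalImage Λ X)) := by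
  have : IsNoetherian Λ X := isNoetherian_of_tower K inferInstance
  have : IsArtinian Λ X := isArtinian_of_tower K inferInstance
  have : Module.Finite (End Λ X) X := .of_restrictScalars_finite K _ X
  have : IsLocalRing (End Λ X) := isLocalRing_end_of_indecomposable hind
  have hmkQ : (radicalImage Λ X).mkQ ≠ 0 := mkQ_ne_zero_of_ne_top radicalImage_ne_top
  have hzero := quotient_linearMap_eq_zero (radicalImage Λ X) hXN
  refine ⟨hzero, ⟨_, hmkQ⟩, ?_⟩
  have : Subsingleton ((X ⧸ radicalImage Λ X) →ₗ[Λ] N) := subsingleton_of_forall_eq 0 hzero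
  have : Nontrivial (X →ₗ[Λ] (X ⧸ radicalImage Λ X)) := nontrivial_of_ne _ _ hmkQ
  have : FiniteDimensional K (X →ₗ[Λ] (X ⧸ radicalImage Λ X)) := finite_linearMap_of_tower ..
  rw [finrank_zero_of_subsingleton]
  exact finrank_pos

/-- **`β(X)` detects positivity of `g_X · dim β(X)`.**  Let `K` be a field, `Λ` a
finite-dimensional `K`-algebra, `X` a nonzero finite-dimensional indecomposable left
`Λ`-module, and `N` a module with `Hom_Λ(X, N) = 0`.  Let
`B = β(X) = X / Σ_{f ∈ rad(X,X)} im(f)`.  Then `Hom_Λ(B, N) = 0` and `Hom_Λ(X, B) ≠ 0`;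
in particular, if `N` is finite-dimensional then
`dim_K Hom_Λ(X, B) > dim_K Hom_Λ(B, N)`. -/
theorem stmt9 (K Λ : Type*) [Field K] [Ring Λ] [Algebra K Λ] [FiniteDimensional K Λ]
    (X : Type*) [AddCommGroup X] [Module Λ X] [Module K X] [IsScalarTower K Λ X]
    [SMulCommClass Λ K X] [FiniteDimensional K X]
    (hX : Nontrivial X)
    (hind : ∀ A B : Submodule Λ X, IsCompl A B → A = ⊥ ∨ B = ⊥)
    (N : Type*) [AddCommGroup N] [Module Λ N] [Module K N] [IsScalarTower K Λ N]
    [SMulCommClass Λ K N]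
    (hXN : ∀ f : X →ₗ[Λ] N, f = 0) :
    (∀ g : (X ⧸ ⨆ f ∈ {f : Module.End Λ X | ¬ IsUnit f}, LinearMap.range f) →ₗ[Λ] N,
        g = 0) ∧
    (∃ h : X →ₗ[Λ] (X ⧸ ⨆ f ∈ {f : Module.End Λ X | ¬ IsUnit f}, LinearMap.range f),
        h ≠ 0) ∧
    (FiniteDimensional K N →
      finrank K ((X ⧸ ⨆ f ∈ {f : Module.End Λ X | ¬ IsUnit f}, LinearMap.range f) →ₗ[Λ] N)
        < finrank K
          (X →ₗ[Λ] (X ⧸ ⨆ f ∈ {f : Module.End Λ X | ¬ IsUnit f}, LinearMap.range f))) :=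
  have ⟨hzero, hnonzero, hlt⟩ := stmt9_general K Λ X hind N hXN
  ⟨hzero, hnonzero, fun _ ↦ hlt⟩
end
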